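/- Let (W, S) be an arbitrary Coxeter system, let s, t ∈ S with m(s,t) ≥ 3, and let u ∈ W_c be fully commutative with a reduced factorization u = s·t·u′ (so ℓ(u) = ℓ(u′) + 2). If a ∈ S satisfies a ≠ s and m(a,t) ≥ 3, then ℓ(au) > ℓ(u), i.e. a ∉ 𝓛(u). -/

import Mathlib

open CoxeterSystem

variable {B W : Type*} [Group W] {M : CoxeterMatrix B} (cs : CoxeterSystem M W)

/-- `m(s,t) ≥ 3`: `s` and `t` are distinct noncommuting generators
(`M s t = 0` encodes `m(s,t) = ∞`). -/
def Noncomm (M : CoxeterMatrix B) (s t : B) : Prop := M s t = 0 ∨ 3 ≤ M s t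

/-- The longest element `w_{st}` of the rank-2 parabolic subgroup `⟨s,t⟩`
(meaningful when `3 ≤ M s t < ∞`). -/
def longest (s t : B) : W := cs.wordProd (alternatingWord s t (M s t))

/-- `w` is complex: it admits a reduced factorization `x₁ · w_{st} · x₂` where `w_{st}`
is the longest element of a rank-2 parabolic subgroup `⟨s,t⟩` with `3 ≤ m(s,t) < ∞`. -/
def IsComplex (w : W) : Prop :=
  ∃ s t : B, 3 ≤ M s t ∧ ∃ x₁ x₂ : W,
    w = x₁ * longest cs s t * x₂ ∧
    cs.length w = cs.length x₁ + cs.length (longest cs s t : W) + cs.length x₂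

/-- `w` is fully commutative, i.e. `w ∈ W_c`. -/
def FullyComm (w : W) : Prop := ¬ IsComplex cs w

/-- `x` is weakly complex: `x` is complex and `x = s·u` reduced with `u` fully commutative. -/
def IsWeaklyComplex (x : W) : Prop :=
  IsComplex cs x ∧ ∃ (s : B) (u : W), FullyComm cs u ∧ x = cs.simple s * u ∧
    cs.length x = 1 + cs.length u

/-- The alternating product `t s t s ⋯` with `k` factors, beginning with `t`. -/
def altProd (t s : B) (k : ℕ) : W :=
  cs.wordProd ((List.range k).map (fun i => if i % 2 = 0 then t else s))

/-- The left descent set `𝓛(w)`. -/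
def leftDescents (w : W) : Set B := {i | cs.IsLeftDescent w i}

/-- The right descent set `𝓡(w)`. -/
def rightDescents (w : W) : Set B := {i | cs.IsRightDescent w i}

/-- `w` is a reduced product of distinct pairwise commuting generators. -/
def IsCommProd (w : W) : Prop :=
  ∃ l : List B, l.Nodup ∧ (∀ u ∈ l, ∀ u' ∈ l, u ≠ u' → M u u' = 2) ∧
    cs.IsReduced l ∧ w = cs.wordProd l

/-- `y` is left star reducible to `x` with respect to the pair `{s,t}`:
`x` and `y` lie in the same left `{s,t}`-string and `ℓ(x) = ℓ(y) − 1`. -/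
def LeftStarReducible (s t : B) (y x : W) : Prop :=
  Noncomm M s t ∧
  ((cs.IsLeftDescent y s ∧ ¬ cs.IsLeftDescent y t ∧ x = cs.simple s * y ∧
      cs.IsLeftDescent x t) ∨
   (cs.IsLeftDescent y t ∧ ¬ cs.IsLeftDescent y s ∧ x = cs.simple t * y ∧
      cs.IsLeftDescent x s))

/-- `y` is right star reducible to `x` with respect to the pair `{s,t}`. -/
def RightStarReducible (s t : B) (y x : W) : Prop :=
  Noncomm M s t ∧
  ((cs.IsRightDescent y s ∧ ¬ cs.IsRightDescent y t ∧ x = y * cs.simple s ∧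
      cs.IsRightDescent x t) ∨
   (cs.IsRightDescent y t ∧ ¬ cs.IsRightDescent y s ∧ x = y * cs.simple t ∧
      cs.IsRightDescent x s))

/-- `y` is star reducible to `x`: there is a (possibly empty) chain of left and right
star reductions from `y` to `x`. -/
def StarReducible (y x : W) : Prop :=
  Relation.ReflTransGen
    (fun a b => ∃ s t : B, LeftStarReducible cs s t a b ∨ RightStarReducible cs s t a b) y x

/-- Property F: every fully commutative element is star reducible to a reduced product of
distinct pairwise commuting generators. -/
def PropertyF : Prop := ∀ w : W, FullyComm cs w → ∃ x : W, StarReducible cs w x ∧ IsCommProd cs x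

/-- `n(w)`: the maximum `k` such that `w` admits a reduced factorization `w = w₁·w₂·w₃`
with `w₂` a reduced product of `k` distinct pairwise commuting generators. -/
noncomputable def nval (w : W) : ℕ :=
  sSup {k | ∃ w₁ w₂ w₃ : W, w = w₁ * w₂ * w₃ ∧
    cs.length w = cs.length w₁ + cs.length w₂ + cs.length w₃ ∧
    IsCommProd cs w₂ ∧ cs.length w₂ = k}

/-- The Bruhat order: `x ≤ w` iff some reduced word for `w` has a subword that is a
reduced word for `x`. -/
def BruhatLE (x w : W) : Prop :=
  ∃ l l' : List B, cs.IsReduced l ∧ cs.wordProd l = w ∧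
    l'.Sublist l ∧ cs.IsReduced l' ∧ cs.wordProd l' = x

/-- `w = wI · wII` is the coset decomposition of `w` with respect to `I = {s,t}`:
`wI ∈ W_I`, `𝓛(wII) ∩ I = ∅` and `ℓ(w) = ℓ(wI) + ℓ(wII)`. -/
def CosetDecompL (s t : B) (w wI wII : W) : Prop :=
  w = wI * wII ∧ wI ∈ Subgroup.closure {cs.simple s, cs.simple t} ∧
  ¬ cs.IsLeftDescent wII s ∧ ¬ cs.IsLeftDescent wII t ∧
  cs.length w = cs.length wI + cs.length wII

/-- `w = wII · wI` is the right coset decomposition of `w` with respect to `I = {s,t}`: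
`wI ∈ W_I`, `𝓡(wII) ∩ I = ∅` and `ℓ(w) = ℓ(wII) + ℓ(wI)`. -/
def CosetDecompR (s t : B) (w wII wI : W) : Prop :=
  w = wII * wI ∧ wI ∈ Subgroup.closure {cs.simple s, cs.simple t} ∧
  ¬ cs.IsRightDescent wII s ∧ ¬ cs.IsRightDescent wII t ∧
  cs.length w = cs.length wII + cs.length wI

/-- `k_ε(J) = (−1)^{|J ∩ ε⁻¹(0)|}` for a set `J` of generators. -/
noncomputable def kSet (ε : B → Bool) (J : Set B) : ℤ :=
  (-1) ^ (J ∩ {i | ε i = false}).ncard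

/-- `k_ε(w) = k_ε(𝓛(w)) · k_ε(𝓡(w))`. -/
noncomputable def kElt (ε : B → Bool) (w : W) : ℤ :=
  kSet ε (leftDescents cs w) * kSet ε (rightDescents cs w)

/-! ### The order of a product of two generators -/

section GeometricRepresentation

open Real Module Polynomial

/-- The simple coroot `v ↦ 2 B(αᵢ, v)` of the geometric representation on `B →₀ ℝ`. -/
noncomputable def geomCoroot (M : CoxeterMatrix B) (i : B) : Dual ℝ (B →₀ ℝ) :=
  Finsupp.linearCombination ℝ fun j => -(2 * cos (π / M i j))

theorem geomCoroot_single (M : CoxeterMatrix B) (i j : B) :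
    geomCoroot M i (Finsupp.single j 1) = -(2 * cos (π / M i j)) := by
  simp [geomCoroot]

theorem geomCoroot_single_self (M : CoxeterMatrix B) (i : B) :
    geomCoroot M i (Finsupp.single i 1) = 2 := by
  simp [geomCoroot_single]

/-- The simple reflection of the geometric representation. -/
noncomputable def geomReflection (M : CoxeterMatrix B) (i : B) : (B →₀ ℝ) ≃ₗ[ℝ] (B →₀ ℝ) :=
  reflection (geomCoroot_single_self M i)

theorem geomCoroot_mul_geomCoroot_sub_two (M : CoxeterMatrix B) (i j : B) :
    2 * cos (2 * (π / M i j)) =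
      geomCoroot M i (Finsupp.single j 1) * geomCoroot M j (Finsupp.single i 1) - 2 := by
  rw [geomCoroot_single, geomCoroot_single, M.symmetric j i, cos_two_mul]
  ring

theorem sin_two_mul_pi_div_ne_zero {m : ℕ} (hm : 3 ≤ m) : sin (2 * (π / m)) ≠ 0 := by
  have hm' : (3 : ℝ) ≤ m := by exact_mod_cast hm
  refine (sin_pos_of_pos_of_lt_pi (by positivity) ?_).ne'
  rw [← mul_div_assoc, div_lt_iff₀ (by positivity)]
  nlinarith [pi_pos]

theorem geomReflection_mul_pow (M : CoxeterMatrix B) (i j : B) :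
    (geomReflection M i * geomReflection M j) ^ M i j = 1 := by
  rcases eq_or_ne i j with rfl | hij
  · ext1 v
    simp [geomReflection, involutive_reflection (geomCoroot_single_self M i) v]
  obtain h0 | h2 | h3 : M i j = 0 ∨ M i j = 2 ∨ 3 ≤ M i j := by
    have := M.off_diagonal i j hij
    omega
  · simp [h0]
  · have hi : geomCoroot M i (Finsupp.single j 1) = 0 := by simp [geomCoroot_single, h2]
    have hj : geomCoroot M j (Finsupp.single i 1) = 0 := by
      simp [geomCoroot_single, M.symmetric j i, h2]
    ext1 v
    simp only [h2, pow_two, LinearEquiv.mul_apply, geomReflection, reflection_apply, map_sub,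
      map_smul, hi, hj, geomCoroot_single_self, LinearEquiv.coe_one, id]
    module
  · ext1 v
    have hsin := sin_two_mul_pi_div_ne_zero h3
    have hm : (M i j : ℝ) ≠ 0 := by positivity
    have hS : ∀ n : ℤ, (Chebyshev.S ℝ n).eval (2 * cos (2 * (π / M i j))) =
        sin ((n + 1) * (2 * (π / M i j))) / sin (2 * (π / M i j)) := fun n => by
      rw [eq_div_iff hsin, Chebyshev.S_two_mul_real_cos]
    rw [geomReflection, geomReflection, reflection_mul_reflection_pow_apply _ _ _ _ _
      (geomCoroot_mul_geomCoroot_sub_two M i j)]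
    obtain ⟨k, hk | hk⟩ := Nat.even_or_odd' (M i j)
    · have e₁ : ((M i j : ℤ) - 2) / 2 = k - 1 := by omega
      have e₂ : ((M i j : ℤ) - 1) / 2 = k - 1 := by omega
      have hzero : (Chebyshev.S ℝ (k - 1)).eval (2 * cos (2 * (π / M i j))) = 0 := by
        rw [hS]
        have : (((k - 1 : ℤ) : ℝ) + 1) * (2 * (π / M i j)) = π := by
          have : (M i j : ℝ) = 2 * k := by exact_mod_cast hk
          field_simp
          push_cast
          linarith
        rw [this, sin_pi, zero_div]
      rw [e₁, e₂, hzero]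
      simp
    · have e₁ : ((M i j : ℤ) - 1) / 2 = k := by omega
      have e₂ : ((M i j : ℤ) - 3) / 2 = k - 1 := by omega
      have e₃ : (M i j : ℤ) / 2 = k := by omega
      have e₄ : ((M i j : ℤ) - 2) / 2 = k - 1 := by omega
      have hzero : (Chebyshev.S ℝ k).eval (2 * cos (2 * (π / M i j))) +
          (Chebyshev.S ℝ (k - 1)).eval (2 * cos (2 * (π / M i j))) = 0 := by
        rw [hS, hS, ← add_div]
        have h : (M i j : ℝ) = 2 * k + 1 := by exact_mod_cast hk
        have : (((k : ℤ) : ℝ) + 1) * (2 * (π / M i j)) =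
            2 * π - (((k - 1 : ℤ) : ℝ) + 1) * (2 * (π / M i j)) := by
          field_simp
          push_cast
          linarith
        rw [this, sin_two_pi_sub, neg_add_cancel, zero_div]
      rw [e₁, e₂, e₃, e₄, hzero]
      simp

theorem geomReflection_mul_pow_ne_one (M : CoxeterMatrix B) {i j : B} (hij : i ≠ j) {k : ℕ}
    (hk : 0 < k) (hkM : M i j = 0 ∨ k < M i j) :
    (geomReflection M i * geomReflection M j) ^ k ≠ 1 := by
  intro h
  have hx := congrArg (fun e => e (Finsupp.single i 1)) h
  simp only [geomReflection] at hx
  rw [reflection_mul_reflection_pow_apply_self _ _ _ _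
    (geomCoroot_mul_geomCoroot_sub_two M i j)] at hx
  have hxi := DFunLike.congr_fun hx i
  have hxj := DFunLike.congr_fun hx j
  simp only [geomCoroot_single, M.symmetric j i, Finsupp.add_apply, Finsupp.smul_apply,
    Finsupp.single_eq_same, Finsupp.single_eq_of_ne hij, Finsupp.single_eq_of_ne hij.symm,
    LinearEquiv.coe_one, id, smul_eq_mul, mul_one, mul_zero, add_zero, zero_add, neg_neg] at hxi hxj
  obtain h0 | h2 | h3 : M i j = 0 ∨ M i j = 2 ∨ 3 ≤ M i j := by
    have := M.off_diagonal i j hij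
    omega
  · simp [h0] at hxj
    omega
  · obtain rfl : k = 1 := by omega
    norm_num [h2, mul_div_cancel₀] at hxi
  · have hkM : k < M i j := by omega
    have h3' : (3 : ℝ) ≤ M i j := by exact_mod_cast h3
    have hsin := sin_two_mul_pi_div_ne_zero h3
    have hcos : cos (π / M i j) ≠ 0 := by
      intro hc
      rw [sin_two_mul, hc, mul_zero] at hsin
      exact hsin rfl
    have hzero : (Chebyshev.S ℝ (k - 1)).eval (2 * cos (2 * (π / M i j))) = 0 := by
      simpa [hcos] using hxj
    have hone : (Chebyshev.S ℝ k).eval (2 * cos (2 * (π / M i j))) = 1 := by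
      simpa [hzero] using hxi
    have hs₀ := Chebyshev.S_two_mul_real_cos (2 * (π / M i j)) (k - 1)
    have hs₁ := Chebyshev.S_two_mul_real_cos (2 * (π / M i j)) k
    rw [hzero, zero_mul] at hs₀
    rw [hone, one_mul] at hs₁
    push_cast at hs₀ hs₁
    rw [sub_add_cancel] at hs₀
    rw [add_mul, one_mul, sin_add, ← hs₀, zero_mul, zero_add] at hs₁
    have hcos_one : cos (k * (2 * (π / M i j))) = 1 :=
      mul_right_cancel₀ hsin (by rw [← hs₁, one_mul])
    obtain ⟨n, hn⟩ := (cos_eq_one_iff _).1 hcos_one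
    have hnk : (n : ℝ) * M i j = k := by
      field_simp at hn
      linarith
    have hnk' : n * (M i j : ℤ) = k := by exact_mod_cast hnk
    have hdvd : M i j ∣ k := Int.natCast_dvd_natCast.1 ⟨n, by rw [← hnk', mul_comm]⟩
    exact absurd (Nat.le_of_dvd hk hdvd) (by omega)

theorem simple_mul_simple_pow_ne_one {i j : B} (hij : i ≠ j) {k : ℕ}
    (hk : 0 < k) (hkM : M i j = 0 ∨ k < M i j) :
    (cs.simple i * cs.simple j) ^ k ≠ 1 := by
  intro h
  apply geomReflection_mul_pow_ne_one M hij hk hkM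
  have hlift : M.IsLiftable (geomReflection M) := geomReflection_mul_pow M
  rw [← cs.lift_apply_simple hlift i, ← cs.lift_apply_simple hlift j, ← map_mul, ← map_pow, h,
    map_one]

end GeometricRepresentation

/-! ### The exchange condition -/

section Exchange

open Classical in
/-- The action of a simple reflection on `W × ZMod 2` by conjugation on the first component, with
a sign change exactly over the reflection itself. -/
noncomputable def signedConj (i : B) : Function.End (W × ZMod 2) := fun p =>
  (cs.simple i * p.1 * cs.simple i, p.2 + if p.1 = cs.simple i then 1 else 0)

open Classical in
theorem signedConj_mul_pow_apply (i j : B) (n : ℕ) (p : W × ZMod 2) :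
    ((signedConj cs i * signedConj cs j) ^ n) p =
      ((cs.simple i * cs.simple j) ^ n * p.1 * (cs.simple j * cs.simple i) ^ n,
        p.2 + ∑ l ∈ Finset.range (2 * n),
          if p.1 = (cs.simple j * cs.simple i) ^ l * cs.simple j then 1 else 0) := by
  induction n with
  | zero => simp [Function.End.one_def]
  | succ n ih =>
    have hinv : ((cs.simple i * cs.simple j) ^ n)⁻¹ = (cs.simple j * cs.simple i) ^ n := by
      rw [← inv_pow]; simp
    have hshift : cs.simple j * (cs.simple i * cs.simple j) ^ n =
        (cs.simple j * cs.simple i) ^ n * cs.simple j :=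
      (SemiconjBy.pow_right (by simp [SemiconjBy, mul_assoc]) n)
    have h₁ : (cs.simple i * cs.simple j) ^ n * p.1 * (cs.simple j * cs.simple i) ^ n =
          cs.simple j ↔ p.1 = (cs.simple j * cs.simple i) ^ (2 * n) * cs.simple j := by
      rw [← hinv, mul_inv_eq_iff_eq_mul, hshift, ← eq_inv_mul_iff_mul_eq, hinv, two_mul, pow_add,
        mul_assoc]
    have h₂ : cs.simple j * ((cs.simple i * cs.simple j) ^ n * p.1 *
          (cs.simple j * cs.simple i) ^ n) * cs.simple j = cs.simple i ↔
        p.1 = (cs.simple j * cs.simple i) ^ (2 * n + 1) * cs.simple j := by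
      rw [← hinv, ← eq_mul_inv_iff_mul_eq, cs.inv_simple, ← eq_inv_mul_iff_mul_eq, cs.inv_simple,
        mul_inv_eq_iff_eq_mul, ← eq_inv_mul_iff_mul_eq, hinv, mul_assoc, mul_assoc, hshift,
        two_mul, add_assoc, pow_add, pow_succ']
      simp only [mul_assoc]
    rw [pow_succ', show 2 * (n + 1) = 2 * n + 1 + 1 by ring, Finset.sum_range_succ,
      Finset.sum_range_succ]
    change signedConj cs i (signedConj cs j (((signedConj cs i * signedConj cs j) ^ n) p)) = _
    rw [ih]
    simp only [signedConj, h₁, h₂]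
    refine Prod.ext ?_ ?_
    · simp only [pow_succ' (cs.simple i * cs.simple j), pow_succ (cs.simple j * cs.simple i),
        mul_assoc]
    · simp only [add_assoc]

theorem isLiftable_signedConj : M.IsLiftable (signedConj cs) := by
  classical
  intro i j
  funext p
  rw [signedConj_mul_pow_apply, two_mul, Finset.sum_range_add]
  simp [pow_add, CharTwo.add_self_eq_zero, Function.End.one_def]

open Classical in
theorem lift_signedConj_wordProd_apply (ω : List B) (r : W) (e : ZMod 2) :
    cs.lift ⟨signedConj cs, isLiftable_signedConj cs⟩ (cs.wordProd ω) (r, e) =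
      (cs.wordProd ω * r * (cs.wordProd ω)⁻¹, e + ((cs.rightInvSeq ω).count r : ZMod 2)) := by
  induction ω with
  | nil => simp [Function.End.one_def]
  | cons i ω ih =>
    rw [cs.wordProd_cons, map_mul, cs.lift_apply_simple]
    change signedConj cs i (_) = _
    rw [ih]
    have hiff : cs.wordProd ω * r * (cs.wordProd ω)⁻¹ = cs.simple i ↔
        (cs.wordProd ω)⁻¹ * cs.simple i * cs.wordProd ω = r := by
      rw [mul_inv_eq_iff_eq_mul, ← eq_inv_mul_iff_mul_eq, eq_comm, mul_assoc]
    simp only [signedConj, hiff, CoxeterSystem.rightInvSeq, List.count_cons, beq_iff_eq]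
    refine Prod.ext ?_ ?_
    · simp [mul_assoc]
    · push_cast
      simp only [add_assoc]

open Classical in
/-- The parity of the multiplicity of `r` in a left inversion sequence depends only on the group
element that the word represents. -/
theorem count_leftInvSeq_eq {ω ω' : List B} (h : cs.wordProd ω = cs.wordProd ω') (r : W) :
    ((cs.leftInvSeq ω).count r : ZMod 2) = (cs.leftInvSeq ω').count r := by
  have key := lift_signedConj_wordProd_apply cs ω.reverse r 0
  rw [cs.wordProd_reverse, h, ← cs.wordProd_reverse, lift_signedConj_wordProd_apply] at key
  simpa [cs.rightInvSeq_reverse] using (Prod.ext_iff.1 key).2.symm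

theorem simple_mem_leftInvSeq_of_isLeftDescent {ω : List B} {i : B}
    (h : cs.IsLeftDescent (cs.wordProd ω) i) : cs.simple i ∈ cs.leftInvSeq ω := by
  classical
  obtain ⟨ρ, hρ, hρω⟩ := cs.exists_isReduced (cs.simple i * cs.wordProd ω)
  have hprod : cs.wordProd (i :: ρ) = cs.wordProd ω := by
    rw [cs.wordProd_cons, ← hρω, cs.simple_mul_simple_cancel_left]
  have hred : cs.IsReduced (i :: ρ) := by
    rw [CoxeterSystem.IsReduced, hprod, List.length_cons, ← hρ.eq, ← hρω]
    exact (cs.isLeftDescent_iff.1 h).symm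
  have hcount : (cs.leftInvSeq (i :: ρ)).count (cs.simple i) = 1 :=
    List.count_eq_one_of_mem hred.nodup_leftInvSeq (by simp [CoxeterSystem.leftInvSeq])
  by_contra hmem
  have := count_leftInvSeq_eq cs hprod (cs.simple i)
  rw [hcount, List.count_eq_zero_of_not_mem hmem] at this
  simp at this

theorem mem_leftInvSeq_append {ω ω' : List B} {r : W} (h : r ∈ cs.leftInvSeq (ω ++ ω')) :
    r ∈ cs.leftInvSeq ω ∨
      ∃ r' ∈ cs.leftInvSeq ω', r = cs.wordProd ω * r' * (cs.wordProd ω)⁻¹ := by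
  induction ω generalizing r with
  | nil => right; simpa using h
  | cons i ω ih =>
    simp only [List.cons_append, CoxeterSystem.leftInvSeq, List.mem_cons, List.mem_map] at h ⊢
    rcases h with h | ⟨q, hq, rfl⟩
    · exact .inl (.inl h)
    · rcases ih hq with hq | ⟨r', hr', rfl⟩
      · exact .inl (.inr ⟨q, hq, rfl⟩)
      · exact .inr ⟨r', hr', by simp [cs.wordProd_cons, mul_assoc]⟩

end Exchange

/-! ### Elements with two left descents -/

/-- The alternating word `s t s ⋯` with `k` letters, beginning with `s`. -/
def altWord (s t : B) : ℕ → List B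
  | 0 => []
  | k + 1 => s :: altWord t s k

theorem length_altWord (s t : B) (k : ℕ) : (altWord s t k).length = k := by
  induction k generalizing s t with
  | zero => rfl
  | succ k ih => simp [altWord, ih]

theorem alternatingWord_eq_altWord (s t : B) (k : ℕ) :
    alternatingWord s t k = altWord (if Even k then s else t) (if Even k then t else s) k := by
  induction k with
  | zero => rfl
  | succ k ih =>
    rw [alternatingWord_succ', ih, altWord]
    by_cases hk : Even k <;> simp [hk, Nat.even_add_one]

theorem exists_pow_of_mem_leftInvSeq_altWord {s t : B} {k : ℕ} {r : W}
    (h : r ∈ cs.leftInvSeq (altWord s t k)) :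
    ∃ j < k, r = (cs.simple s * cs.simple t) ^ j * cs.simple s := by
  induction k generalizing s t r with
  | zero => simp [altWord] at h
  | succ k ih =>
    simp only [altWord, CoxeterSystem.leftInvSeq, List.mem_cons, List.mem_map] at h
    rcases h with rfl | ⟨q, hq, rfl⟩
    · exact ⟨0, k.succ_pos, by simp⟩
    · obtain ⟨j, hj, rfl⟩ := ih hq
      refine ⟨j + 1, by omega, ?_⟩
      have hshift : cs.simple s * (cs.simple t * cs.simple s) ^ j =
          (cs.simple s * cs.simple t) ^ j * cs.simple s :=
        (SemiconjBy.pow_right (by simp [SemiconjBy, mul_assoc]) j)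
      rw [MulAut.conj_apply, cs.inv_simple, ← mul_assoc, hshift, pow_succ]
      simp only [mul_assoc]

theorem simple_not_mem_leftInvSeq_altWord {s t : B} (hst : s ≠ t) {k : ℕ}
    (hk : M s t = 0 ∨ k < M s t) : cs.simple t ∉ cs.leftInvSeq (altWord s t k) := by
  intro h
  obtain ⟨j, hj, hjt⟩ := exists_pow_of_mem_leftInvSeq_altWord cs h
  refine simple_mul_simple_pow_ne_one cs hst j.succ_pos (by omega) ?_
  rw [pow_succ, ← mul_assoc, ← hjt, cs.simple_mul_simple_self]

theorem exists_eq_altWord_mul {s t : B} (hst : s ≠ t) {w : W} (hs : cs.IsLeftDescent w s)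
    (ht : cs.IsLeftDescent w t) {k : ℕ} (hk : M s t = 0 ∨ k ≤ M s t) :
    ∃ x, w = cs.wordProd (altWord s t k) * x ∧ cs.length w = k + cs.length x := by
  induction k generalizing s t with
  | zero => exact ⟨w, by simp [altWord]⟩
  | succ k ih =>
    rw [M.symmetric] at hk
    obtain ⟨x, hw, hlen⟩ := ih hst.symm ht hs (by omega)
    obtain ⟨ρ, hρ, rfl⟩ := cs.exists_isReduced x
    rw [← cs.wordProd_append] at hw
    have hmem := simple_mem_leftInvSeq_of_isLeftDescent cs (hw ▸ hs)
    obtain ⟨r, hr, hrs⟩ := (mem_leftInvSeq_append cs hmem).resolve_left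
      (simple_not_mem_leftInvSeq_altWord cs hst.symm (by omega))
    have hlt := (cs.isLeftInversion_of_mem_leftInvSeq hρ hr).2
    have hfac : w = cs.wordProd (altWord s t (k + 1)) * (r * cs.wordProd ρ) := by
      rw [altWord, cs.wordProd_cons, hrs, hw, cs.wordProd_append]
      simp only [mul_assoc, inv_mul_cancel_left]
      rw [← mul_assoc r r, (cs.isReflection_of_mem_leftInvSeq ρ hr).mul_self, one_mul]
    refine ⟨_, hfac, ?_⟩
    have h₁ := cs.length_mul_le (cs.wordProd (altWord s t (k + 1))) (r * cs.wordProd ρ)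
    have h₂ := cs.length_wordProd_le (altWord s t (k + 1))
    rw [← hfac] at h₁
    rw [length_altWord] at h₂
    omega

/-- If `s ≠ t` are both left descents of `w`, then `m(s,t)` is finite and `w = w_{st} · x` is a
reduced factorization for some `x`. -/
theorem exists_eq_longest_mul {s t : B} (hst : s ≠ t) {w : W} (hs : cs.IsLeftDescent w s)
    (ht : cs.IsLeftDescent w t) :
    M s t ≠ 0 ∧ ∃ x, w = longest cs s t * x ∧
      cs.length w = cs.length (longest cs s t) + cs.length x := by
  constructor
  · intro h
    obtain ⟨x, -, hx⟩ := exists_eq_altWord_mul cs hst hs ht (k := cs.length w + 1) (.inl h)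
    omega
  · obtain ⟨x, hx, hlen⟩ :
        ∃ x, w = longest cs s t * x ∧ cs.length w = M s t + cs.length x := by
      rw [longest, alternatingWord_eq_altWord]
      by_cases hk : Even (M s t)
      · simpa [hk] using exists_eq_altWord_mul cs hst hs ht (.inr le_rfl)
      · simpa [hk] using exists_eq_altWord_mul cs hst.symm ht hs (.inr (M.symmetric s t).le)
    refine ⟨x, hx, ?_⟩
    have h₁ := cs.length_mul_le (longest cs s t) x
    have h₂ : cs.length (longest cs s t) ≤ M s t :=
      (cs.length_wordProd_le _).trans_eq (length_alternatingWord s t _)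
    rw [← hx] at h₁
    omega

theorem ne_of_noncomm {s t : B} (h : Noncomm M s t) : s ≠ t := by
  rintro rfl
  simp [Noncomm] at h

/-- Let `s, t ∈ S` with `m(s,t) ≥ 3` and let `u ∈ W_c` have a reduced factorization
`u = s·t·u′`.  If `a ∈ S` satisfies `a ≠ s` and `m(a,t) ≥ 3`, then `ℓ(au) > ℓ(u)`. -/
theorem statement14 (s t : B) (hst : Noncomm M s t) (u u' : W)
    (hu : FullyComm cs u) (hfac : u = cs.simple s * cs.simple t * u')
    (hred : cs.length u = cs.length u' + 2)
    (a : B) (has : a ≠ s) (hat : Noncomm M a t) :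
    cs.length u < cs.length (cs.simple a * u) := by
  by_contra hlt
  have ha : cs.IsLeftDescent u a :=
    lt_of_le_of_ne (not_lt.1 hlt) (cs.length_simple_mul_ne u a)
  have hsu : cs.simple s * u = cs.simple t * u' := by
    rw [hfac, mul_assoc, cs.simple_mul_simple_cancel_left]
  have hbound : cs.length (cs.simple t * u') ≤ cs.length u' + 1 := by
    rcases cs.length_simple_mul u' t with h | h <;> omega
  have hs : cs.IsLeftDescent u s := by
    rw [CoxeterSystem.IsLeftDescent, hsu]
    omega
  have hslen := cs.isLeftDescent_iff.1 hs
  obtain ⟨hfin, x, hx, hxlen⟩ := exists_eq_longest_mul cs has ha hs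
  by_cases h3 : 3 ≤ M a s
  · exact hu ⟨a, s, h3, 1, x, by simpa using hx, by simpa using hxlen⟩
  have h2 : M a s = 2 := by
    have := M.off_diagonal a s has
    omega
  have hlong : longest cs a s = cs.simple a * cs.simple s := by
    simp [longest, h2, alternatingWord, cs.wordProd_cons]
  have hcomm : cs.simple a * cs.simple s = cs.simple s * cs.simple a := by
    have h := cs.simple_mul_simple_pow a s
    rw [h2, pow_two, mul_eq_one_iff_eq_inv] at h
    simpa using h
  have hsux : cs.simple s * u = cs.simple a * x := by
    rw [hx, hlong, hcomm, mul_assoc, cs.simple_mul_simple_cancel_left]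
  have hta : cs.IsLeftDescent (cs.simple s * u) t := by
    rw [CoxeterSystem.IsLeftDescent, hsu, cs.simple_mul_simple_cancel_left, ← hsu]
    omega
  have hxlt : cs.length x + 2 ≤ cs.length u := by
    have hle : 2 ≤ cs.length (longest cs a s) := by
      by_contra hlt2
      rcases cs.length_simple_mul (cs.simple s) a with h | h
      · rw [hlong, h, cs.length_simple] at hlt2
        omega
      · rw [cs.length_simple] at h
        have hone := cs.length_eq_zero_iff.1 (Nat.succ_injective h)
        exact simple_mul_simple_pow_ne_one cs has one_pos (by omega) (by rw [pow_one, hone])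
    omega
  have haa : cs.IsLeftDescent (cs.simple s * u) a := by
    have hcancel : cs.simple a * (cs.simple s * u) = x := by
      rw [hsux, cs.simple_mul_simple_cancel_left]
    rw [CoxeterSystem.IsLeftDescent, hcancel]
    omega
  obtain ⟨hfin', y, hy, hylen⟩ := exists_eq_longest_mul cs (ne_of_noncomm hat) haa hta
  refine hu ⟨a, t, hat.resolve_left hfin', cs.simple s, y, ?_, ?_⟩
  · rw [mul_assoc, ← hy, cs.simple_mul_simple_cancel_left]
  · rw [cs.length_simple]
    omega
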